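/- Let α: π → SU(3) be an irreducible homomorphism. Then α(h) = e^{2πik/3}·I for some integer k, and the real dimension of H^1(π; su(3)_α) equals 2 if each of α(x), α(y), α(z) has three pairwise distinct eigenvalues, and equals 0 otherwise. -/

import Mathlib

/-!
The central element `α(h)` commutes with the irreducible `α`, so it is scalar by Schur's lemma, hence
a cube root of unity times the identity, and `h` acts trivially on `V = su(3)`.

Irreducibility also gives that `V` has no nonzero invariant vectors (an invariant matrix is scalar,
and traceless) and, through the invariant definite trace form, no nonzero invariant linear forms.
The value at `h` of a `1`-cocycle `f` is an invariant vector, since `h` is central and acts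
trivially; so `f(h) = 0`. Then `f` vanishes on `x^p`, `y^q`, `z^r`, which are powers of `h`, and over
`ℝ` this forces `f(x) ∈ (1 - x)V`, and likewise for `y` and `z`
(`mem_range_one_sub_of_pow`). Conversely, any such triple of values satisfying the condition imposed
by `x y z = 1` comes from a cocycle (`exists_cocycle`). So `Z¹` is the kernel of the linear map
`relMap : (1 - x)V × (1 - y)V × (1 - z)V → V`, which is onto because a linear form vanishing on its
range is invariant. As `B¹ ≅ V`, this yields (`finrank_H1_add`)

  `dim H¹ + dim ker(1 - x) + dim ker(1 - y) + dim ker(1 - z) = dim V = 8`.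

Here `ker(1 - g)` is the centraliser of `α(g)` in `su(3)`. After unitary diagonalisation its dimension
is seen to be `2` when `α(g)` has three distinct eigenvalues, and at least `4` otherwise
(`finrank_commSu3_of_ncard`, `four_le_finrank_commSu3`). Three regular elements give `dim H¹ = 2`;
if one of them is not regular the centralisers already fill up the total `8`, so `dim H¹ = 0`.
-/

/-- Relators of the presentation
`⟨x,y,z,h | x^p = h^a, y^q = h^a, z^r = h^c, xyz = 1, h central⟩` of the fundamental group of
the Brieskorn homology sphere `Σ(p,q,r)`; the generators `x, y, z, h` are `0, 1, 2, 3 : Fin 4`. -/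
def brieskornRels (p q r : ℕ) (a c : ℤ) : Set (FreeGroup (Fin 4)) :=
  { FreeGroup.of 0 ^ p * (FreeGroup.of 3 ^ a)⁻¹,
    FreeGroup.of 1 ^ q * (FreeGroup.of 3 ^ a)⁻¹,
    FreeGroup.of 2 ^ r * (FreeGroup.of 3 ^ c)⁻¹,
    FreeGroup.of 0 * FreeGroup.of 1 * FreeGroup.of 2,
    FreeGroup.of 3 * FreeGroup.of 0 * (FreeGroup.of 0 * FreeGroup.of 3)⁻¹,
    FreeGroup.of 3 * FreeGroup.of 1 * (FreeGroup.of 1 * FreeGroup.of 3)⁻¹,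
    FreeGroup.of 3 * FreeGroup.of 2 * (FreeGroup.of 2 * FreeGroup.of 3)⁻¹ }

/-- The fundamental group of the Brieskorn homology sphere `Σ(p,q,r)`. -/
abbrev BrieskornGroup (p q r : ℕ) (a c : ℤ) : Type := PresentedGroup (brieskornRels p q r a c)

namespace BrieskornGroup
variable {p q r : ℕ} {a c : ℤ}
/-- The generator `x`. -/
def x : BrieskornGroup p q r a c := PresentedGroup.of 0
/-- The generator `y`. -/
def y : BrieskornGroup p q r a c := PresentedGroup.of 1
/-- The generator `z`. -/
def z : BrieskornGroup p q r a c := PresentedGroup.of 2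
/-- The central generator `h`. -/
def h : BrieskornGroup p q r a c := PresentedGroup.of 3
end BrieskornGroup

open Matrix in
/-- The special unitary group `SU(n)` of `n × n` complex matrices with determinant `1`,
as a subgroup of the unitary group. -/
noncomputable def SU (n : ℕ) : Subgroup (Matrix.unitaryGroup (Fin n) ℂ) where
  carrier := {A | (A : Matrix (Fin n) (Fin n) ℂ).det = 1}
  one_mem' := by simp
  mul_mem' := by
    intro a b ha hb
    show ((a * b : Matrix.unitaryGroup (Fin n) ℂ) : Matrix (Fin n) (Fin n) ℂ).det = 1
    rw [Submonoid.coe_mul, Matrix.det_mul]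
    rw [Set.mem_setOf_eq] at ha hb
    rw [ha, hb, mul_one]
  inv_mem' := by
    intro a ha
    show ((a⁻¹ : Matrix.unitaryGroup (Fin n) ℂ) : Matrix (Fin n) (Fin n) ℂ).det = 1
    rw [Set.mem_setOf_eq] at ha
    have : ((a⁻¹ : Matrix.unitaryGroup (Fin n) ℂ) : Matrix (Fin n) (Fin n) ℂ)
        = star (a : Matrix (Fin n) (Fin n) ℂ) := rfl
    rw [this]
    show (Matrix.conjTranspose _).det = 1
    rw [Matrix.det_conjTranspose, ha, star_one]

/-- The underlying matrix of an element of `SU(n)`. -/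
noncomputable abbrev matSU {n : ℕ} (A : SU n) : Matrix (Fin n) (Fin n) ℂ := A.val.val

open Matrix in
/-- The Lie algebra `su(3)` of traceless skew-Hermitian `3 × 3` complex matrices,
as a real submodule of the `3 × 3` complex matrices. -/
noncomputable def su3 : Submodule ℝ (Matrix (Fin 3) (Fin 3) ℂ) where
  carrier := {X | Xᴴ = -X ∧ X.trace = 0}
  add_mem' := by
    rintro X Y ⟨hX1, hX2⟩ ⟨hY1, hY2⟩
    exact ⟨by rw [conjTranspose_add, hX1, hY1, neg_add], by rw [trace_add, hX2, hY2, add_zero]⟩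
  zero_mem' := ⟨by simp, by simp⟩
  smul_mem' := by
    rintro r X ⟨hX1, hX2⟩
    constructor
    · rw [conjTranspose_smul, hX1, star_trivial, smul_neg]
    · rw [trace_smul, hX2, smul_zero]

open Matrix in
/-- The representation of a group `G` on `su(3)`, pulled back along `α : G → SU(3)` from the
adjoint action `g • X = α(g) · X · α(g)⁻¹`. -/
noncomputable def adjRep {G : Type} [Group G] (α : G →* SU 3) : Representation ℝ G su3 where
  toFun g :=
    { toFun := fun X =>
        ⟨matSU (α g) * (X : Matrix (Fin 3) (Fin 3) ℂ) * matSU ((α g)⁻¹), by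
          obtain ⟨hX1, hX2⟩ := X.2
          have hV : matSU ((α g)⁻¹) = star (matSU (α g)) := rfl
          have h1 : star (matSU (α g)) * matSU (α g) = 1 := (α g).val.prop.1
          constructor
          · show (matSU (α g) * (X : Matrix (Fin 3) (Fin 3) ℂ) * matSU ((α g)⁻¹))ᴴ = _
            rw [Matrix.conjTranspose_mul, Matrix.conjTranspose_mul, hX1, hV,
              Matrix.star_eq_conjTranspose, Matrix.conjTranspose_conjTranspose]
            simp only [Matrix.neg_mul, Matrix.mul_neg]
            rw [← Matrix.star_eq_conjTranspose, ← hV]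
            noncomm_ring
          · show Matrix.trace
                (matSU (α g) * (X : Matrix (Fin 3) (Fin 3) ℂ) * matSU ((α g)⁻¹)) = 0
            rw [Matrix.trace_mul_cycle, hV, h1, Matrix.one_mul, hX2]⟩
      map_add' := by intro X Y; apply Subtype.ext; simp [mul_add, add_mul]
      map_smul' := by intro r X; apply Subtype.ext; simp [Matrix.mul_smul, Matrix.smul_mul] }
  map_one' := by
    apply LinearMap.ext; intro X; apply Subtype.ext
    show matSU (α 1) * (X : Matrix (Fin 3) (Fin 3) ℂ) * matSU ((α 1)⁻¹)
      = (X : Matrix (Fin 3) (Fin 3) ℂ)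
    rw [_root_.map_one, inv_one]
    show (1 : Matrix (Fin 3) (Fin 3) ℂ) * (X : Matrix (Fin 3) (Fin 3) ℂ) *
      (1 : Matrix (Fin 3) (Fin 3) ℂ) = (X : Matrix (Fin 3) (Fin 3) ℂ)
    simp
  map_mul' := by
    intro g g'
    apply LinearMap.ext; intro X; apply Subtype.ext
    show matSU (α (g * g')) * (X : Matrix (Fin 3) (Fin 3) ℂ) * matSU ((α (g * g'))⁻¹)
      = matSU (α g) * (matSU (α g') * (X : Matrix (Fin 3) (Fin 3) ℂ) * matSU ((α g')⁻¹))
        * matSU ((α g)⁻¹)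
    rw [_root_.map_mul, _root_.mul_inv_rev]
    show matSU (α g) * matSU (α g') * (X : Matrix (Fin 3) (Fin 3) ℂ)
        * (matSU ((α g')⁻¹) * matSU ((α g)⁻¹))
      = matSU (α g) * (matSU (α g') * (X : Matrix (Fin 3) (Fin 3) ℂ) * matSU ((α g')⁻¹))
        * matSU ((α g)⁻¹)
    noncomm_ring

/-- A homomorphism `α : G → SU(3)` is irreducible if no complex subspace of `ℂ³` other than
`0` and `ℂ³` is invariant under `α(g)` for every `g`. -/
def IsIrrep {G : Type} [Group G] (α : G →* SU 3) : Prop :=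
  ∀ W : Submodule ℂ (Fin 3 → ℂ),
    (∀ g : G, ∀ v ∈ W, (matSU (α g)).mulVec v ∈ W) → W = ⊥ ∨ W = ⊤


/-! ### Relations in the Brieskorn group -/

section GroupPart

open BrieskornGroup

variable {p q r : ℕ} {a c : ℤ}

lemma brieskorn_rel {s : FreeGroup (Fin 4)} (hs : s ∈ brieskornRels p q r a c) :
    PresentedGroup.mk (brieskornRels p q r a c) s = 1 :=
  PresentedGroup.one_of_mem hs

lemma x_pow : (x : BrieskornGroup p q r a c) ^ p = h ^ a := by
  have := brieskorn_rel (p := p) (q := q) (r := r) (a := a) (c := c)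
    (s := FreeGroup.of 0 ^ p * (FreeGroup.of 3 ^ a)⁻¹) (by simp [brieskornRels])
  rw [map_mul, map_inv, map_pow, map_zpow] at this
  exact mul_inv_eq_one.mp this

lemma y_pow : (y : BrieskornGroup p q r a c) ^ q = h ^ a := by
  have := brieskorn_rel (p := p) (q := q) (r := r) (a := a) (c := c)
    (s := FreeGroup.of 1 ^ q * (FreeGroup.of 3 ^ a)⁻¹) (by simp [brieskornRels])
  rw [map_mul, map_inv, map_pow, map_zpow] at this
  exact mul_inv_eq_one.mp this

lemma z_pow : (z : BrieskornGroup p q r a c) ^ r = h ^ c := by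
  have := brieskorn_rel (p := p) (q := q) (r := r) (a := a) (c := c)
    (s := FreeGroup.of 2 ^ r * (FreeGroup.of 3 ^ c)⁻¹) (by simp [brieskornRels])
  rw [map_mul, map_inv, map_pow, map_zpow] at this
  exact mul_inv_eq_one.mp this

lemma xyz_eq_one : (x : BrieskornGroup p q r a c) * y * z = 1 := by
  have := brieskorn_rel (p := p) (q := q) (r := r) (a := a) (c := c)
    (s := FreeGroup.of 0 * FreeGroup.of 1 * FreeGroup.of 2) (by simp [brieskornRels])
  rwa [map_mul, map_mul] at this

/-- Induction over generators, in the form suited to stabilisers and centralisers. -/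
lemma mem_of_generators (H : Subgroup (BrieskornGroup p q r a c)) (hx : x ∈ H) (hy : y ∈ H)
    (hz : z ∈ H) (hh : h ∈ H) (g : BrieskornGroup p q r a c) : g ∈ H := by
  refine PresentedGroup.generated_by _ H (fun j => ?_) g
  fin_cases j
  exacts [hx, hy, hz, hh]

lemma h_mul_comm (g : BrieskornGroup p q r a c) : h * g = g * h := by
  have key : ∀ i : Fin 4, FreeGroup.of 3 * FreeGroup.of i * (FreeGroup.of i * FreeGroup.of 3)⁻¹ ∈
      brieskornRels p q r a c →
      (PresentedGroup.of i : BrieskornGroup p q r a c) ∈ Subgroup.centralizer {h} := by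
    intro i hi
    have := brieskorn_rel hi
    rw [map_mul, map_inv, map_mul, map_mul] at this
    rw [Subgroup.mem_centralizer_singleton_iff]
    exact (mul_inv_eq_one.mp this).symm
  have hg : g ∈ Subgroup.centralizer {(h : BrieskornGroup p q r a c)} := by
    refine mem_of_generators _ (key 0 (by simp [brieskornRels])) (key 1 (by simp [brieskornRels]))
      (key 2 (by simp [brieskornRels])) ?_ g
    rw [Subgroup.mem_centralizer_singleton_iff]
  exact (Subgroup.mem_centralizer_singleton_iff.mp hg).symm

end GroupPart

/-! ### Cocycles -/

section Cohomology

open BrieskornGroup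

/-- A cocycle vanishing at some positive power of `g` takes at `g` a value of the form `w - g w`: it
restricts to a coboundary on the subgroup generated by `g`. -/
lemma mem_range_one_sub_of_pow {G V : Type} [Group G] [AddCommGroup V] [Module ℝ V]
    (ρ : Representation ℝ G V) (f : groupCohomology.cocycles₁ (Rep.of ρ)) (g : G) (n : ℕ)
    (hn : 0 < n) (hf : f (g ^ n) = 0) : f g ∈ LinearMap.range (1 - ρ g) := by
  -- modulo the range of `1 - ρ g`, which contains every `v - ρ (g ^ k) v`, `f (g ^ k) ≡ k • f g`
  have hmul := (groupCohomology.mem_cocycles₁_iff (A := Rep.of ρ) f).1 f.2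
  have key : ∀ k : ℕ, (k : ℝ) • f g - f (g ^ k) ∈ LinearMap.range (1 - ρ g) := by
    intro k
    induction k with
    | zero =>
      have : f (g ^ 0) = 0 := by simp
      rw [this]; simp
    | succ k ih =>
      have h1 : f (g ^ (k + 1)) = ρ g (f (g ^ k)) + f g := by
        rw [pow_succ']; exact hmul g (g ^ k)
      have h2 : ((k + 1 : ℕ) : ℝ) • f g - f (g ^ (k + 1)) =
          ((k : ℝ) • f g - f (g ^ k)) + (1 - ρ g) (f (g ^ k)) := by
        rw [h1]; push_cast
        simp only [LinearMap.sub_apply, Module.End.one_apply, add_smul, one_smul]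
        abel
      rw [h2]
      exact Submodule.add_mem _ ih ⟨_, rfl⟩
  have h3 := key n
  rw [hf, sub_zero] at h3
  have hn' : (n : ℝ) ≠ 0 := by positivity
  have h4 := Submodule.smul_mem _ (n : ℝ)⁻¹ h3
  rwa [smul_smul, inv_mul_cancel₀ hn', one_smul] at h4

lemma cocycle_zpow_eq_zero {G V : Type} [Group G] [AddCommGroup V] [Module ℝ V]
    (ρ : Representation ℝ G V) (f : groupCohomology.cocycles₁ (Rep.of ρ)) (g : G)
    (hf : f g = 0) (n : ℤ) : f (g ^ n) = 0 := by
  have hmul := (groupCohomology.mem_cocycles₁_iff (A := Rep.of ρ) f).1 f.2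
  let H : Subgroup G :=
    { carrier := {k | f k = 0}
      one_mem' := groupCohomology.cocycles₁_map_one f
      mul_mem' := by
        intro k l hk hl
        have := hmul k l
        rw [show f k = 0 from hk, show f l = 0 from hl, map_zero, add_zero] at this
        exact this
      inv_mem' := by
        intro k hk
        have := hmul k⁻¹ k
        rw [show f k = 0 from hk, map_zero, zero_add, inv_mul_cancel,
          groupCohomology.cocycles₁_map_one f] at this
        exact this.symm }
  exact H.zpow_mem (show g ∈ H from hf) n

variable {p q r : ℕ} {a c : ℤ} {V : Type} [AddCommGroup V] [Module ℝ V]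

/-- The action of `G` on the multiplicative form of `V`, as needed for the semidirect product. -/
def mulAutOfRep {G : Type} [Group G] (ρ : Representation ℝ G V) : G →* MulAut (Multiplicative V) where
  toFun g :=
    { toFun := fun v => Multiplicative.ofAdd (ρ g v.toAdd)
      invFun := fun v => Multiplicative.ofAdd (ρ g⁻¹ v.toAdd)
      left_inv := fun v => by simp
      right_inv := fun v => by simp
      map_mul' := fun v w => by simp }
  map_one' := by ext v; simp
  map_mul' g k := by ext v; simp

lemma mulAutOfRep_apply {G : Type} [Group G] (ρ : Representation ℝ G V) (g : G)
    (v : Multiplicative V) : mulAutOfRep ρ g v = Multiplicative.ofAdd (ρ g v.toAdd) := rfl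

/-- The semidirect product `V ⋊ G` attached to a representation; its splittings over `G` are the
`1`-cocycles. -/
abbrev AffineExt {G : Type} [Group G] (ρ : Representation ℝ G V) : Type :=
  Multiplicative V ⋊[mulAutOfRep ρ] G

/-- Prescribed values `(1 - x) u`, `(1 - y) v`, `(1 - z) w` on `x, y, z` and `0` on `h` extend to a
cocycle as soon as they are compatible with `x y z = 1`. The corresponding splitting into the
semidirect product `V ⋊ π` sends each generator to a conjugate of itself by an element of `V`, which
is why the power relations hold. -/
lemma exists_cocycle (ρ : Representation ℝ (BrieskornGroup p q r a c) V) (hh : ρ h = 1)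
    (u v w : V) (huvw : (1 - ρ x) u + ρ x ((1 - ρ y) v) + ρ (x * y) ((1 - ρ z) w) = 0) :
    ∃ f : groupCohomology.cocycles₁ (Rep.of ρ),
      f x = (1 - ρ x) u ∧ f y = (1 - ρ y) v ∧ f z = (1 - ρ z) w := by
  let cj : V → BrieskornGroup p q r a c → AffineExt ρ := fun u g =>
    SemidirectProduct.inl (Multiplicative.ofAdd u) * SemidirectProduct.inr g *
      (SemidirectProduct.inl (Multiplicative.ofAdd u))⁻¹
  have cj_left : ∀ u g, (cj u g).left = Multiplicative.ofAdd ((1 - ρ g) u) := by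
    intro u g
    simp [cj, mulAutOfRep_apply, sub_eq_add_neg]
  have cj_right : ∀ u g, (cj u g).right = g := by
    intro u g; simp [cj]
  have cj_pow : ∀ u g (n : ℕ), cj u g ^ n = cj u (g ^ n) := by
    intro u g n; simp [cj, conj_pow]
  have hh' : ∀ n : ℤ, ρ (h ^ n) = 1 := by
    intro n
    have : h ∈ ρ.ker := hh
    exact ρ.ker.zpow_mem this n
  have cj_h : ∀ u (n : ℤ), cj u (h ^ n) = SemidirectProduct.inr h ^ n := by
    intro u n
    rw [← map_zpow]
    ext
    · rw [cj_left, hh', SemidirectProduct.left_inr]; simp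
    · rw [cj_right, SemidirectProduct.right_inr]
  have comm : ∀ u g, SemidirectProduct.inr h * cj u g = cj u g * SemidirectProduct.inr h := by
    intro u g
    ext
    · simp [cj_left, mulAutOfRep_apply, hh]
    · simp [cj_right, h_mul_comm]
  let F : Fin 4 → AffineExt ρ := ![cj u x, cj v y, cj w z, SemidirectProduct.inr h]
  have hF : ∀ s ∈ brieskornRels p q r a c, FreeGroup.lift F s = 1 := by
    intro s hs
    simp only [brieskornRels, Set.mem_insert_iff, Set.mem_singleton_iff] at hs
    rcases hs with rfl | rfl | rfl | rfl | rfl | rfl | rfl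
    · simp [F, cj_pow, x_pow, cj_h]
    · simp [F, cj_pow, y_pow, cj_h]
    · simp [F, cj_pow, z_pow, cj_h]
    · simp only [map_mul, FreeGroup.lift_apply_of, F]
      ext
      · simpa [cj_left, cj_right, mulAutOfRep_apply] using huvw
      · simpa [cj_right] using xyz_eq_one
    · simp only [map_mul, map_inv, FreeGroup.lift_apply_of, F]; exact mul_inv_eq_one.mpr (comm _ _)
    · simp only [map_mul, map_inv, FreeGroup.lift_apply_of, F]; exact mul_inv_eq_one.mpr (comm _ _)
    · simp only [map_mul, map_inv, FreeGroup.lift_apply_of, F]; exact mul_inv_eq_one.mpr (comm _ _)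
  let Φ := PresentedGroup.toGroup hF
  have hΦ : ∀ i, Φ (PresentedGroup.of i) = F i := fun i => PresentedGroup.toGroup.of hF
  have hΦr : ∀ g, (Φ g).right = g := by
    have : (SemidirectProduct.rightHom).comp Φ = MonoidHom.id _ := by
      apply PresentedGroup.ext
      intro i
      simp only [MonoidHom.comp_apply, hΦ, MonoidHom.id_apply, SemidirectProduct.rightHom_eq_right]
      fin_cases i
      exacts [cj_right _ _, cj_right _ _, cj_right _ _, rfl]
    exact fun g => DFunLike.congr_fun this g
  refine ⟨⟨fun g => (Φ g).left.toAdd, ?_⟩, ?_, ?_, ?_⟩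
  · rw [groupCohomology.mem_cocycles₁_iff]
    intro g k
    simp [hΦr, mulAutOfRep_apply, add_comm]
  · exact congrArg (fun s : AffineExt ρ => s.left.toAdd) (hΦ 0) |>.trans (by simp [F, cj_left])
  · exact congrArg (fun s : AffineExt ρ => s.left.toAdd) (hΦ 1) |>.trans (by simp [F, cj_left])
  · exact congrArg (fun s : AffineExt ρ => s.left.toAdd) (hΦ 2) |>.trans (by simp [F, cj_left])

end Cohomology

/-! ### The dimension of the first cohomology -/

section Dimension

open BrieskornGroup groupCohomology

variable {p q r : ℕ} {a c : ℤ} {V : Type} [AddCommGroup V] [Module ℝ V]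

/-- The boundary map of `x y z = 1`: it sends `(u, v, w)` to the value at `x y z` of the cocycle with
values `u, v, w` at `x, y, z`. -/
noncomputable def relMap (ρ : Representation ℝ (BrieskornGroup p q r a c) V) :
    (LinearMap.range (1 - ρ x) × LinearMap.range (1 - ρ y) × LinearMap.range (1 - ρ z)) →ₗ[ℝ] V :=
  (LinearMap.range (1 - ρ x)).subtype.coprod
    ((ρ x ∘ₗ (LinearMap.range (1 - ρ y)).subtype).coprod
      (ρ (x * y) ∘ₗ (LinearMap.range (1 - ρ z)).subtype))

lemma relMap_apply (ρ : Representation ℝ (BrieskornGroup p q r a c) V)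
    (u : LinearMap.range (1 - ρ x)) (v : LinearMap.range (1 - ρ y))
    (w : LinearMap.range (1 - ρ z)) :
    relMap ρ (u, v, w) = (u : V) + (ρ x v + ρ (x * y) w) := rfl

/-- A linear form vanishing on the range of `relMap` is invariant, so `relMap` is onto as soon as
there are no nonzero invariant linear forms. -/
lemma relMap_surjective (ρ : Representation ℝ (BrieskornGroup p q r a c) V) (hh : ρ h = 1)
    (hdual : ∀ φ : Module.Dual ℝ V, (∀ g v, φ (ρ g v) = φ v) → φ = 0) :
    LinearMap.range (relMap ρ) = ⊤ := by
  by_contra hne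
  obtain ⟨φ, hφ0, hφ⟩ := Submodule.exists_le_ker_of_lt_top _ (lt_top_iff_ne_top.mpr hne)
  apply hφ0
  have hker : ∀ u v w, φ (relMap ρ (u, v, w)) = 0 := fun u v w => hφ ⟨_, rfl⟩
  have hx : ∀ v, φ (ρ x v) = φ v := by
    intro v
    have := hker ⟨(1 - ρ x) v, v, rfl⟩ 0 0
    simp [relMap_apply, sub_eq_zero] at this
    exact this.symm
  have hy : ∀ v, φ (ρ y v) = φ v := by
    intro v
    have := hker 0 ⟨(1 - ρ y) v, v, rfl⟩ 0
    simp [relMap_apply, sub_eq_zero, hx] at this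
    exact this.symm
  have hz : ∀ v, φ (ρ z v) = φ v := by
    intro v
    have := hker 0 0 ⟨(1 - ρ z) v, v, rfl⟩
    simp [relMap_apply, sub_eq_zero, hx, hy] at this
    exact this.symm
  refine hdual φ fun g => ?_
  let H : Subgroup (BrieskornGroup p q r a c) :=
    { carrier := {g | ∀ v, φ (ρ g v) = φ v}
      one_mem' := by intro v; simp
      mul_mem' := by
        intro g k hg hk v
        rw [map_mul, Module.End.mul_apply, hg, hk]
      inv_mem' := by
        intro g hg v
        rw [← hg (ρ g⁻¹ v)]; simp }
  exact mem_of_generators H hx hy hz (by intro v; rw [hh]; rfl) g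

/-- A cocycle vanishes at `h`, because its value there is an invariant vector. -/
lemma cocycle_h_eq_zero (ρ : Representation ℝ (BrieskornGroup p q r a c) V) (hh : ρ h = 1)
    (hinv : ∀ v : V, (∀ g, ρ g v = v) → v = 0) (f : cocycles₁ (Rep.of ρ)) : f h = 0 := by
  have hmul := (mem_cocycles₁_iff (A := Rep.of ρ) f).1 f.2
  refine hinv _ fun g => ?_
  have h1 : f (h * g) = ρ h (f g) + f h := hmul h g
  have h2 : f (g * h) = ρ g (f h) + f g := hmul g h
  rw [h_mul_comm, h2, hh, Module.End.one_apply, add_comm] at h1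
  exact add_left_cancel h1

/-- The values of a cocycle at `x, y, z`. -/
noncomputable def evalXYZ (ρ : Representation ℝ (BrieskornGroup p q r a c) V) :
    cocycles₁ (Rep.of ρ) →ₗ[ℝ] V × V × V where
  toFun f := (f x, f y, f z)
  map_add' _ _ := rfl
  map_smul' _ _ := rfl

lemma evalXYZ_injective (ρ : Representation ℝ (BrieskornGroup p q r a c) V) (hh : ρ h = 1)
    (hinv : ∀ v : V, (∀ g, ρ g v = v) → v = 0) : Function.Injective (evalXYZ ρ) := by
  rw [← LinearMap.ker_eq_bot, LinearMap.ker_eq_bot']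
  intro f hf
  have hmul := (mem_cocycles₁_iff (A := Rep.of ρ) f).1 f.2
  simp only [evalXYZ, LinearMap.coe_mk, AddHom.coe_mk, Prod.mk_eq_zero] at hf
  let H : Subgroup (BrieskornGroup p q r a c) :=
    { carrier := {k | f k = 0}
      one_mem' := cocycles₁_map_one f
      mul_mem' := by
        intro k l hk hl
        have := hmul k l
        rw [show f k = 0 from hk, show f l = 0 from hl, map_zero, add_zero] at this
        exact this
      inv_mem' := by
        intro k hk
        have := cocycle_zpow_eq_zero ρ f k hk (-1)
        rwa [zpow_neg_one] at this }
  apply cocycles₁_ext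
  exact fun g => mem_of_generators H hf.1 hf.2.1 hf.2.2 (cocycle_h_eq_zero ρ hh hinv f) g

lemma range_evalXYZ (hp : 0 < p) (hq : 0 < q) (hr : 0 < r)
    (ρ : Representation ℝ (BrieskornGroup p q r a c) V) (hh : ρ h = 1)
    (hinv : ∀ v : V, (∀ g, ρ g v = v) → v = 0) :
    LinearMap.range (evalXYZ ρ) = (LinearMap.ker (relMap ρ)).map
      ((LinearMap.range (1 - ρ x)).subtype.prodMap
        ((LinearMap.range (1 - ρ y)).subtype.prodMap (LinearMap.range (1 - ρ z)).subtype)) := by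
  apply le_antisymm
  · rintro _ ⟨f, rfl⟩
    have hmul := (mem_cocycles₁_iff (A := Rep.of ρ) f).1 f.2
    have hf := cocycle_zpow_eq_zero ρ f h (cocycle_h_eq_zero ρ hh hinv f)
    have hx := mem_range_one_sub_of_pow ρ f x p hp (by rw [x_pow, hf])
    have hy := mem_range_one_sub_of_pow ρ f y q hq (by rw [y_pow, hf])
    have hz := mem_range_one_sub_of_pow ρ f z r hr (by rw [z_pow, hf])
    refine ⟨(⟨_, hx⟩, ⟨_, hy⟩, ⟨_, hz⟩), ?_, rfl⟩
    have h1 : f (x * y * z) = ρ (x * y) (f z) + f (x * y) := hmul _ _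
    have h2 : f (x * y) = ρ x (f y) + f x := hmul _ _
    rw [xyz_eq_one, cocycles₁_map_one, h2] at h1
    rw [SetLike.mem_coe, LinearMap.mem_ker, relMap_apply, h1]
    abel
  · rintro _ ⟨⟨⟨_, u, rfl⟩, ⟨_, v, rfl⟩, ⟨_, w, rfl⟩⟩, hk, rfl⟩
    rw [SetLike.mem_coe, LinearMap.mem_ker, relMap_apply] at hk
    obtain ⟨f, h1, h2, h3⟩ := exists_cocycle ρ hh u v w (by rw [add_assoc]; exact hk)
    exact ⟨f, Prod.ext h1 (Prod.ext h2 h3)⟩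

lemma finrank_range_one_sub [FiniteDimensional ℝ V] (T : V →ₗ[ℝ] V) :
    Module.finrank ℝ (LinearMap.range (1 - T)) + Module.finrank ℝ (LinearMap.ker (1 - T)) =
      Module.finrank ℝ V :=
  LinearMap.finrank_range_add_finrank_ker _

/-- The dimension of `H¹` is that of `Z¹` (the kernel of `relMap`) minus that of `B¹ ≅ V`. -/
theorem finrank_H1_add [FiniteDimensional ℝ V] (hp : 0 < p) (hq : 0 < q) (hr : 0 < r)
    (ρ : Representation ℝ (BrieskornGroup p q r a c) V) (hh : ρ h = 1)
    (hinv : ∀ v : V, (∀ g, ρ g v = v) → v = 0)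
    (hdual : ∀ φ : Module.Dual ℝ V, (∀ g v, φ (ρ g v) = φ v) → φ = 0) :
    Module.finrank ℝ (H1 (Rep.of ρ)) + Module.finrank ℝ (LinearMap.ker (1 - ρ x))
      + Module.finrank ℝ (LinearMap.ker (1 - ρ y)) + Module.finrank ℝ (LinearMap.ker (1 - ρ z))
      = Module.finrank ℝ V := by
  have hinj := evalXYZ_injective ρ hh hinv
  have hfin : FiniteDimensional ℝ (cocycles₁ (Rep.of ρ)) := Module.Finite.of_injective _ hinj
  have hZ : Module.finrank ℝ (cocycles₁ (Rep.of ρ)) =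
      Module.finrank ℝ (LinearMap.ker (relMap ρ)) := by
    rw [← LinearMap.finrank_range_of_inj hinj, range_evalXYZ hp hq hr ρ hh hinv]
    refine LinearEquiv.finrank_eq (Submodule.equivMapOfInjective _ ?_ _).symm
    exact Prod.map_injective.mpr ⟨Subtype.val_injective,
      Prod.map_injective.mpr ⟨Subtype.val_injective, Subtype.val_injective⟩⟩
  have hrel := LinearMap.finrank_range_add_finrank_ker (relMap ρ)
  rw [relMap_surjective ρ hh hdual, finrank_top, Module.finrank_prod, Module.finrank_prod] at hrel
  have hx := finrank_range_one_sub (ρ x)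
  have hy := finrank_range_one_sub (ρ y)
  have hz := finrank_range_one_sub (ρ z)
  have hB : Module.finrank ℝ (coboundaries₁ (Rep.of ρ)) = Module.finrank ℝ V := by
    refine LinearMap.finrank_range_of_inj (f := (d₀₁ (Rep.of ρ)).hom) ?_
    rw [← LinearMap.ker_eq_bot, LinearMap.ker_eq_bot']
    intro v hv
    refine hinv v fun g => ?_
    have := congrFun hv g
    exact sub_eq_zero.mp this
  have hH : Module.finrank ℝ (H1 (Rep.of ρ)) + Module.finrank ℝ (coboundaries₁ (Rep.of ρ)) =
      Module.finrank ℝ (cocycles₁ (Rep.of ρ)) := by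
    have hsurj : Function.Surjective (H1π (Rep.of ρ)).hom :=
      (ModuleCat.epi_iff_surjective _).mp inferInstance
    have h1 := LinearMap.finrank_range_add_finrank_ker (H1π (Rep.of ρ)).hom
    rw [LinearMap.range_eq_top.mpr hsurj, finrank_top] at h1
    have h2 : LinearMap.ker (H1π (Rep.of ρ)).hom =
        LinearMap.range (coboundariesToCocycles₁ (Rep.of ρ)) := by
      ext f
      rw [LinearMap.mem_ker]
      refine (H1π_eq_zero_iff (A := Rep.of ρ) f).trans ?_
      rw [coboundariesToCocycles₁, Submodule.range_inclusion]
      rfl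
    rw [h2, LinearMap.finrank_range_of_inj (Submodule.inclusion_injective _)] at h1
    exact h1
  omega

end Dimension

/-! ### Centralisers of diagonal matrices in `su(3)` -/

section LinearAlgebra

open Matrix

/-- The centraliser of a matrix in `su(3)`. -/
noncomputable def commSu3 (A : Matrix (Fin 3) (Fin 3) ℂ) : Submodule ℝ su3 where
  carrier := {X | A * X.1 = X.1 * A}
  add_mem' := by
    intro X Y hX hY
    rw [Set.mem_ofPred_eq] at *
    simp [mul_add, add_mul, hX, hY]
  zero_mem' := by simp
  smul_mem' := by
    intro t X hX
    rw [Set.mem_ofPred_eq] at *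
    simp [hX]

lemma mem_commSu3 {A : Matrix (Fin 3) (Fin 3) ℂ} {X : su3} :
    X ∈ commSu3 A ↔ A * X.1 = X.1 * A := Iff.rfl

/-- Conjugation by a unitary matrix, as an endomorphism of `su(3)`. -/
noncomputable def conjSu3 (U : Matrix (Fin 3) (Fin 3) ℂ) (hU : star U * U = 1) : su3 →ₗ[ℝ] su3 where
  toFun X := ⟨U * X.1 * star U, by
    obtain ⟨h1, h2⟩ := X.2
    constructor
    · simp only [star_eq_conjTranspose, conjTranspose_mul, conjTranspose_conjTranspose, h1]
      noncomm_ring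
    · rw [trace_mul_cycle, hU, one_mul, h2]⟩
  map_add' X Y := by apply Subtype.ext; simp [mul_add, add_mul]
  map_smul' t X := by apply Subtype.ext; simp

lemma finrank_commSu3_le {A D U : Matrix (Fin 3) (Fin 3) ℂ} (hU : star U * U = 1)
    (hA : A * U = U * D) : Module.finrank ℝ (commSu3 D) ≤ Module.finrank ℝ (commSu3 A) := by
  have hU' : U * star U = 1 := mul_eq_one_comm.mp hU
  have hA' : star U * A = D * star U := by
    calc star U * A = star U * A * (U * star U) := by rw [hU', mul_one]
      _ = star U * (A * U) * star U := by noncomm_ring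
      _ = star U * U * D * star U := by rw [hA]; noncomm_ring
      _ = D * star U := by rw [hU, one_mul]
  have hmem : ∀ X ∈ commSu3 D, conjSu3 U hU X ∈ commSu3 A := by
    intro X hX
    rw [mem_commSu3] at *
    show A * (U * X.1 * star U) = U * X.1 * star U * A
    calc A * (U * X.1 * star U) = A * U * X.1 * star U := by noncomm_ring
      _ = U * (D * X.1) * star U := by rw [hA]; noncomm_ring
      _ = U * X.1 * (D * star U) := by rw [hX]; noncomm_ring
      _ = U * X.1 * star U * A := by rw [← hA']; noncomm_ring
  refine LinearMap.finrank_le_finrank_of_injective (f := (conjSu3 U hU).restrict hmem) ?_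
  intro X Y hXY
  apply Subtype.ext
  apply Subtype.ext
  have h1 : U * X.1.1 * star U = U * Y.1.1 * star U :=
    congrArg (fun Z : commSu3 A => Z.1.1) hXY
  have h2 : ∀ Z : Matrix (Fin 3) (Fin 3) ℂ, Z = star U * (U * Z * star U) * U := by
    intro Z
    calc Z = (star U * U) * Z * (star U * U) := by rw [hU]; simp
      _ = _ := by noncomm_ring
  rw [h2 X.1.1, h1, ← h2]

lemma finrank_commSu3_eq {A D U : Matrix (Fin 3) (Fin 3) ℂ} (hU : star U * U = 1)
    (hA : A * U = U * D) : Module.finrank ℝ (commSu3 A) = Module.finrank ℝ (commSu3 D) := by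
  refine le_antisymm (finrank_commSu3_le (U := star U) ?_ ?_) (finrank_commSu3_le hU hA)
  · rw [star_star]; exact mul_eq_one_comm.mp hU
  · have hU' : U * star U = 1 := mul_eq_one_comm.mp hU
    calc D * star U = star U * U * D * star U := by rw [hU, one_mul]
      _ = star U * (A * U) * star U := by rw [hA]; noncomm_ring
      _ = star U * A * (U * star U) := by noncomm_ring
      _ = star U * A := by rw [hU', mul_one]

lemma su3_apply (X : su3) (i j : Fin 3) : star (X.1 j i) = -X.1 i j := by
  have := congrFun (congrFun X.2.1 i) j
  simpa using this

lemma su3_re (X : su3) (i j : Fin 3) : (X.1 j i).re = -(X.1 i j).re := by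
  have := congrArg Complex.re (su3_apply X i j)
  simpa using this

lemma su3_im (X : su3) (i j : Fin 3) : (X.1 j i).im = (X.1 i j).im := by
  have := congrArg Complex.im (su3_apply X i j)
  simpa using this

lemma su3_trace (X : su3) : (X.1 2 2).im = -(X.1 0 0).im - (X.1 1 1).im := by
  have h1 := X.2.2
  rw [trace_fin_three] at h1
  have := congrArg Complex.im h1
  simp at this
  linarith

lemma su3_diag_re (X : su3) (i : Fin 3) : (X.1 i i).re = 0 := by
  have := su3_re X i i
  linarith

/-- The matrix of `su(3)` with prescribed entries above the diagonal and two prescribed diagonal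
entries. -/
noncomputable def su3Mk (s t : ℝ) (u v w : ℂ) : su3 :=
  ⟨!![s * Complex.I, u, v; -star u, t * Complex.I, w; -star v, -star w, -(s + t) * Complex.I], by
    constructor
    · ext i j
      fin_cases i <;> fin_cases j <;> simp
    · simp [trace_fin_three]; ring⟩

lemma finrank_su3 : Module.finrank ℝ su3 = 8 := by
  let L : su3 →ₗ[ℝ] ℝ × ℝ × ℂ × ℂ × ℂ :=
    { toFun := fun X => ((X.1 0 0).im, (X.1 1 1).im, X.1 0 1, X.1 0 2, X.1 1 2)
      map_add' := by intro X Y; simp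
      map_smul' := by intro t X; simp }
  have hL : Function.Bijective L := by
    constructor
    · refine (injective_iff_map_eq_zero L).mpr fun X hX => ?_
      have hX' : ((X.1 0 0).im, (X.1 1 1).im, X.1 0 1, X.1 0 2, X.1 1 2) = 0 := hX
      simp only [Prod.mk_eq_zero] at hX'
      obtain ⟨h0, h1, h2, h3, h4⟩ := hX'
      have e := su3_apply X
      have h5 := su3_trace X
      have e0 := su3_diag_re X
      apply Subtype.ext
      ext i j
      fin_cases i <;> fin_cases j
      · exact Complex.ext (e0 0) h0
      · exact h2
      · exact h3
      · have := e 1 0; rw [h2, star_zero] at this; exact neg_eq_zero.mp this.symm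
      · exact Complex.ext (e0 1) h1
      · exact h4
      · have := e 2 0; rw [h3, star_zero] at this; exact neg_eq_zero.mp this.symm
      · have := e 2 1; rw [h4, star_zero] at this; exact neg_eq_zero.mp this.symm
      · exact Complex.ext (e0 2) (by rw [h0, h1] at h5; simpa using h5)
    · rintro ⟨s, t, u, v, w⟩
      refine ⟨su3Mk s t u v w, ?_⟩
      show (((su3Mk s t u v w).1 0 0).im, ((su3Mk s t u v w).1 1 1).im, (su3Mk s t u v w).1 0 1,
        (su3Mk s t u v w).1 0 2, (su3Mk s t u v w).1 1 2) = _
      simp [su3Mk]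
  rw [(LinearEquiv.ofBijective L hL).finrank_eq]
  simp [Module.finrank_prod, Complex.finrank_real_complex]

lemma mem_commSu3_diagonal {d : Fin 3 → ℂ} {X : su3} :
    X ∈ commSu3 (diagonal d) ↔ ∀ i j, d i * X.1 i j = X.1 i j * d j := by
  rw [mem_commSu3]
  constructor
  · intro h i j
    have := congrFun (congrFun h i) j
    rwa [diagonal_mul, mul_diagonal] at this
  · intro h
    ext i j
    rw [diagonal_mul, mul_diagonal, h]

lemma finrank_commSu3_of_injective {d : Fin 3 → ℂ} (hd : Function.Injective d) :
    Module.finrank ℝ (commSu3 (diagonal d)) = 2 := by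
  let L : commSu3 (diagonal d) →ₗ[ℝ] ℝ × ℝ :=
    { toFun := fun X => ((X.1.1 0 0).im, (X.1.1 1 1).im)
      map_add' := by intro X Y; simp
      map_smul' := by intro t X; simp }
  have hL : Function.Bijective L := by
    constructor
    · intro X Y hXY
      have h0 : (X.1.1 0 0).im = (Y.1.1 0 0).im := congrArg Prod.fst hXY
      have h1 : (X.1.1 1 1).im = (Y.1.1 1 1).im := congrArg Prod.snd hXY
      have hdiag : ∀ i, X.1.1 i i = Y.1.1 i i := by
        intro i
        refine Complex.ext ((su3_diag_re X.1 i).trans (su3_diag_re Y.1 i).symm) ?_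
        fin_cases i
        · exact h0
        · exact h1
        · exact (su3_trace X.1).trans ((by rw [h0, h1] : _ = _).trans (su3_trace Y.1).symm)
      have hoff : ∀ Z : commSu3 (diagonal d), ∀ i j, i ≠ j → Z.1.1 i j = 0 := by
        intro Z i j hij
        have h6 := mem_commSu3_diagonal.mp Z.2 i j
        have h7 : (d i - d j) * Z.1.1 i j = 0 := by linear_combination h6
        exact (mul_eq_zero.mp h7).resolve_left fun h8 => hij (hd (sub_eq_zero.mp h8))
      apply Subtype.ext
      apply Subtype.ext
      ext i j
      by_cases hij : i = j
      · subst hij; exact hdiag i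
      · rw [hoff X i j hij, hoff Y i j hij]
    · rintro ⟨s, t⟩
      refine ⟨⟨su3Mk s t 0 0 0, ?_⟩, ?_⟩
      swap
      · show (((su3Mk s t 0 0 0).1 0 0).im, ((su3Mk s t 0 0 0).1 1 1).im) = _
        simp [su3Mk]
      rw [mem_commSu3_diagonal]
      intro i j
      fin_cases i <;> fin_cases j <;> simp [su3Mk, mul_comm]
  rw [(LinearEquiv.ofBijective L hL).finrank_eq]
  simp

lemma four_le_finrank_commSu3_of_not_injective {d : Fin 3 → ℂ} (hd : ¬ Function.Injective d) :
    4 ≤ Module.finrank ℝ (commSu3 (diagonal d)) := by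
  have hcases : d 0 = d 1 ∨ d 0 = d 2 ∨ d 1 = d 2 := by
    by_contra! hne
    obtain ⟨h1, h2, h3⟩ := hne
    apply hd
    intro i j hij
    fin_cases i <;> fin_cases j <;> simp_all [eq_comm]
  have h4 : Module.finrank ℝ (ℝ × ℝ × ℂ) = 4 := by
    simp [Module.finrank_prod, Complex.finrank_real_complex]
  -- the entry between the two equal eigenvalues is free
  rw [← h4]
  have key : ∀ ι : ℂ →ₗ[ℝ] ℂ × ℂ × ℂ, Function.Injective ι →
      (∀ s t v, su3Mk s t (ι v).1 (ι v).2.1 (ι v).2.2 ∈ commSu3 (diagonal d)) →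
      Module.finrank ℝ (ℝ × ℝ × ℂ) ≤ Module.finrank ℝ (commSu3 (diagonal d)) := by
    intro ι hι hmem
    have hs : ∀ (t : ℝ) v, ι (t * v) = (t * (ι v).1, t * (ι v).2.1, t * (ι v).2.2) := by
      intro t v
      rw [← Complex.real_smul, map_smul]
      rfl
    let L : ℝ × ℝ × ℂ →ₗ[ℝ] commSu3 (diagonal d) :=
      { toFun := fun X => ⟨_, hmem X.1 X.2.1 X.2.2⟩
        map_add' := by
          intro X Y
          apply Subtype.ext; apply Subtype.ext
          ext i j
          fin_cases i <;> fin_cases j <;> simp [su3Mk] <;> ring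
        map_smul' := by
          intro t X
          apply Subtype.ext; apply Subtype.ext
          ext i j
          fin_cases i <;> fin_cases j <;> simp [su3Mk, hs] <;> ring }
    refine LinearMap.finrank_le_finrank_of_injective (f := L) ?_
    rintro ⟨s, t, v⟩ ⟨s', t', v'⟩ hXY
    have hent : ∀ i j, (L (s, t, v)).1.1 i j = (L (s', t', v')).1.1 i j := fun i j => by rw [hXY]
    have e1 := hent 0 0
    have e2 := hent 1 1
    have e3 := hent 0 1
    have e4 := hent 0 2
    have e5 := hent 1 2
    simp [L, su3Mk] at e1 e2 e3 e4 e5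
    have e6 : v = v' := hι (Prod.ext e3 (Prod.ext e4 e5))
    rw [e1, e2, e6]
  rcases hcases with he | he | he
  · refine key (LinearMap.inl ℝ ℂ (ℂ × ℂ)) LinearMap.inl_injective fun s t v => ?_
    rw [mem_commSu3_diagonal]
    intro i j
    fin_cases i <;> fin_cases j <;> simp [su3Mk, he, mul_comm]
  · refine key (LinearMap.inr ℝ ℂ (ℂ × ℂ) ∘ₗ LinearMap.inl ℝ ℂ ℂ)
      (LinearMap.inr_injective.comp LinearMap.inl_injective) fun s t v => ?_
    rw [mem_commSu3_diagonal]
    intro i j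
    fin_cases i <;> fin_cases j <;> simp [su3Mk, he, mul_comm]
  · refine key (LinearMap.inr ℝ ℂ (ℂ × ℂ) ∘ₗ LinearMap.inr ℝ ℂ ℂ)
      (LinearMap.inr_injective.comp LinearMap.inr_injective) fun s t v => ?_
    rw [mem_commSu3_diagonal]
    intro i j
    fin_cases i <;> fin_cases j <;> simp [su3Mk, he, mul_comm]

end LinearAlgebra

/-! ### Centralisers of unitary matrices -/

section Unitary

open Matrix

lemma exists_norm_one_notMem_spectrum (A : Matrix (Fin 3) (Fin 3) ℂ) :
    ∃ w : ℂ, star w * w = 1 ∧ w ∉ spectrum ℂ A := by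
  have hinf : (Metric.sphere (0 : ℂ) 1).Infinite := by
    have : (Set.Ioc (-Real.pi) Real.pi).Infinite :=
      Set.Ioc_infinite (by linarith [Real.pi_pos])
    refine Set.infinite_of_injOn_mapsTo (f := fun t : ℝ => (Circle.exp t : ℂ)) ?_ ?_ this
    · intro s hs t ht hst
      have h1 : Circle.exp s = Circle.exp t := Subtype.ext hst
      rw [← Circle.arg_exp hs.1 hs.2, h1, Circle.arg_exp ht.1 ht.2]
    · intro t _
      simp
  obtain ⟨w, hw1, hw2⟩ := hinf.exists_notMem_finite A.finite_spectrum
  refine ⟨w, ?_, hw2⟩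
  rw [mem_sphere_zero_iff_norm] at hw1
  have := Complex.conj_mul' w
  rw [hw1] at this
  simpa using this

/-- Unitary diagonalisation of a unitary matrix, obtained from the Hermitian case by means of the
Cayley transform `H = i (A + w) (A - w)⁻¹`, where `w` is a number of modulus one which is not an
eigenvalue of `A`. -/
lemma unitary_diagonalization (A : Matrix (Fin 3) (Fin 3) ℂ) (hA : star A * A = 1) :
    ∃ (U : Matrix (Fin 3) (Fin 3) ℂ) (d : Fin 3 → ℂ), star U * U = 1 ∧ A * U = U * diagonal d := by
  obtain ⟨w, hw, hwA⟩ := exists_norm_one_notMem_spectrum A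
  have hunit : IsUnit (A - w • 1) := by
    have h1 := spectrum.notMem_iff.mp hwA
    rw [Algebra.algebraMap_eq_smul_one] at h1
    rw [← neg_sub]
    exact h1.neg
  obtain ⟨B, hB⟩ := hunit
  have hBinv : (A - w • 1) * (↑B⁻¹ : Matrix (Fin 3) (Fin 3) ℂ) = 1 := by rw [← hB]; simp
  have hBinv' : (↑B⁻¹ : Matrix (Fin 3) (Fin 3) ℂ) * (A - w • 1) = 1 := by rw [← hB]; simp
  set C : Matrix (Fin 3) (Fin 3) ℂ := ↑B⁻¹ with hC
  have hcomm : (A + w • 1) * (A - w • 1) = (A - w • 1) * (A + w • 1) := by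
    simp only [mul_sub, mul_add, add_mul, sub_mul, smul_mul_assoc, mul_smul_comm, one_mul, mul_one,
      smul_add, smul_sub]
    abel
  have hcomm' : (A + w • 1) * C = C * (A + w • 1) := by
    calc (A + w • 1) * C = C * (A - w • 1) * (A + w • 1) * C := by rw [hBinv', one_mul]
      _ = C * ((A - w • 1) * (A + w • 1)) * C := by noncomm_ring
      _ = C * (A + w • 1) * ((A - w • 1) * C) := by rw [← hcomm]; noncomm_ring
      _ = C * (A + w • 1) := by rw [hBinv, mul_one]
  let H : Matrix (Fin 3) (Fin 3) ℂ := Complex.I • ((A + w • 1) * C)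
  have hsC : star C * (star A - star w • 1) = 1 := by
    have := congrArg star hBinv
    simpa using this
  have hww : (star A + star w • 1) * (A - w • 1) = -((star A - star w • 1) * (A + w • 1)) := by
    simp only [mul_sub, mul_add, add_mul, sub_mul, smul_mul_assoc, mul_smul_comm, one_mul, mul_one,
      hA, smul_add, smul_sub, smul_smul, mul_comm w (star w), hw, one_smul]
    abel
  have hH : H.IsHermitian := by
    have h1 : star ((A + w • 1) * C) = -((A + w • 1) * C) := by
      calc star ((A + w • 1) * C) = star C * (star A + star w • 1) * ((A - w • 1) * C) := by
            rw [hBinv, mul_one]; simp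
        _ = star C * ((star A + star w • 1) * (A - w • 1)) * C := by noncomm_ring
        _ = -(star C * (star A - star w • 1) * ((A + w • 1) * C)) := by rw [hww]; noncomm_ring
        _ = -((A + w • 1) * C) := by rw [hsC, one_mul]
    show star H = H
    simp only [H, star_smul, h1]
    simp
  let U : Matrix (Fin 3) (Fin 3) ℂ := hH.eigenvectorUnitary
  let l : Fin 3 → ℂ := fun i => (hH.eigenvalues i : ℂ)
  have hU : star U * U = 1 := hH.eigenvectorUnitary.prop.1
  have hHU : H * U = U * diagonal l := by
    have h1 := hH.spectral_theorem
    rw [Unitary.conjStarAlgAut_apply] at h1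
    have h2 : H = U * diagonal l * star U := h1
    rw [h2, mul_assoc, hU, mul_one]
  -- `(A - w) H = i (A + w)`, read on the eigenvector basis
  have h3 : (A - w • 1) * H = Complex.I • (A + w • 1) := by
    simp only [H, mul_smul_comm]
    rw [hcomm', ← mul_assoc, hBinv, one_mul]
  have h4 : (A * U - w • U) * diagonal l = Complex.I • (A * U + w • U) := by
    have : (A - w • 1) * (H * U) = Complex.I • ((A + w • 1) * U) := by
      rw [← mul_assoc, h3, smul_mul_assoc]
    rw [hHU, ← mul_assoc] at this
    simpa [sub_mul, add_mul] using this
  have hne : ∀ j, l j - Complex.I ≠ 0 := by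
    intro j hj
    have := congrArg Complex.im hj
    simp [l] at this
  refine ⟨U, fun j => w * (l j + Complex.I) / (l j - Complex.I), hU, ?_⟩
  ext i j
  have h5 := congrFun (congrFun h4 i) j
  simp only [mul_diagonal, Matrix.sub_apply, Matrix.smul_apply, Matrix.add_apply, smul_eq_mul] at h5
  rw [mul_diagonal]
  field_simp [hne j]
  linear_combination h5

lemma spectrum_eq_range {A U : Matrix (Fin 3) (Fin 3) ℂ} {d : Fin 3 → ℂ} (hU : star U * U = 1)
    (hA : A * U = U * diagonal d) : spectrum ℂ A = Set.range d := by
  have hU' : U * star U = 1 := mul_eq_one_comm.mp hU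
  let u : (Matrix (Fin 3) (Fin 3) ℂ)ˣ := ⟨U, star U, hU', hU⟩
  have h1 : A = u * diagonal d * (↑u⁻¹ : Matrix (Fin 3) (Fin 3) ℂ) := by
    show A = U * diagonal d * star U
    rw [← hA, mul_assoc, hU', mul_one]
  rw [h1, spectrum.units_conjugate, spectrum_diagonal]

lemma ncard_range_eq_three_iff (d : Fin 3 → ℂ) :
    (Set.range d).ncard = 3 ↔ Function.Injective d := by
  classical
  have h1 : (Set.range d).ncard = (Finset.univ.image d).card := by
    rw [← Set.ncard_coe_finset]; simp
  rw [h1]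
  constructor
  · intro h
    have h2 := Finset.card_image_iff.mp (show _ = Finset.univ.card by rw [h]; rfl)
    rwa [Finset.coe_univ, Set.injOn_univ] at h2
  · intro h
    rw [Finset.card_image_of_injective _ h]; rfl

lemma finrank_commSu3_of_ncard {A : Matrix (Fin 3) (Fin 3) ℂ} (hA : star A * A = 1)
    (h : (spectrum ℂ A).ncard = 3) : Module.finrank ℝ (commSu3 A) = 2 := by
  obtain ⟨U, d, hU, hAU⟩ := unitary_diagonalization A hA
  rw [spectrum_eq_range hU hAU, ncard_range_eq_three_iff] at h
  rw [finrank_commSu3_eq hU hAU, finrank_commSu3_of_injective h]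

lemma four_le_finrank_commSu3 {A : Matrix (Fin 3) (Fin 3) ℂ} (hA : star A * A = 1)
    (h : (spectrum ℂ A).ncard ≠ 3) : 4 ≤ Module.finrank ℝ (commSu3 A) := by
  obtain ⟨U, d, hU, hAU⟩ := unitary_diagonalization A hA
  rw [spectrum_eq_range hU hAU, ne_eq, ncard_range_eq_three_iff] at h
  rw [finrank_commSu3_eq hU hAU]
  exact four_le_finrank_commSu3_of_not_injective h

end Unitary

/-! ### Consequences of irreducibility -/

section Irreducible

open Matrix

/-- Schur's lemma: an eigenspace of a matrix commuting with `α` is invariant. -/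
lemma IsIrrep.eq_smul_one {G : Type} [Group G] {α : G →* SU 3} (hα : IsIrrep α)
    (X : Matrix (Fin 3) (Fin 3) ℂ) (hX : ∀ g, matSU (α g) * X = X * matSU (α g)) :
    ∃ μ : ℂ, X = μ • (1 : Matrix (Fin 3) (Fin 3) ℂ) := by
  obtain ⟨μ, hμ⟩ := Module.End.exists_eigenvalue (Matrix.toLin' X)
  refine ⟨μ, ?_⟩
  have h1 := hα (Module.End.eigenspace (Matrix.toLin' X) μ) (by
    intro g v hv
    rw [Module.End.mem_eigenspace_iff, Matrix.toLin'_apply] at *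
    rw [mulVec_mulVec, ← hX, ← mulVec_mulVec, hv, mulVec_smul])
  have h2 := h1.resolve_left hμ
  apply Matrix.toLin'.injective
  apply LinearMap.ext
  intro v
  have h3 : v ∈ Module.End.eigenspace (Matrix.toLin' X) μ := by rw [h2]; trivial
  rw [Module.End.mem_eigenspace_iff] at h3
  rw [h3]; simp

lemma matSU_star_mul (A : SU 3) : star (matSU A) * matSU A = 1 := A.val.prop.1

lemma matSU_mul_star (A : SU 3) : matSU A * star (matSU A) = 1 := A.val.prop.2

lemma adjRep_apply {G : Type} [Group G] (α : G →* SU 3) (g : G) (X : su3) :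
    (adjRep α g X).1 = matSU (α g) * X.1 * star (matSU (α g)) := rfl

lemma adjRep_apply_eq_iff {G : Type} [Group G] (α : G →* SU 3) (g : G) (X : su3) :
    adjRep α g X = X ↔ matSU (α g) * X.1 = X.1 * matSU (α g) := by
  rw [Subtype.ext_iff, adjRep_apply]
  constructor
  · intro h
    conv_rhs => rw [← h]
    rw [mul_assoc _ _ (matSU (α g)), matSU_star_mul, mul_one]
  · intro h
    rw [h, mul_assoc, matSU_mul_star, mul_one]

lemma ker_one_sub_adjRep {G : Type} [Group G] (α : G →* SU 3) (g : G) :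
    LinearMap.ker (1 - adjRep α g) = commSu3 (matSU (α g)) := by
  ext X
  rw [LinearMap.mem_ker, mem_commSu3, ← adjRep_apply_eq_iff, LinearMap.sub_apply,
    Module.End.one_apply, sub_eq_zero, eq_comm]

lemma IsIrrep.invariant_eq_zero {G : Type} [Group G] {α : G →* SU 3} (hα : IsIrrep α)
    (X : su3) (hX : ∀ g, adjRep α g X = X) : X = 0 := by
  obtain ⟨μ, hμ⟩ := hα.eq_smul_one X.1 fun g => (adjRep_apply_eq_iff α g X).mp (hX g)
  have h1 := X.2.2
  rw [hμ] at h1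
  have h2 : μ = 0 := by simpa using h1
  apply Subtype.ext
  rw [hμ, h2, zero_smul]; rfl

/-- The real trace form on `su(3)`. -/
noncomputable def traceForm3 : su3 →ₗ[ℝ] su3 →ₗ[ℝ] ℝ :=
  LinearMap.mk₂ ℝ (fun X Y => (X.1 * Y.1).trace.re)
    (by intros; simp [add_mul]) (by intros; simp) (by intros; simp [mul_add]) (by intros; simp)

lemma traceForm3_apply (X Y : su3) : traceForm3 X Y = (X.1 * Y.1).trace.re := rfl

open scoped ComplexOrder in
/-- The trace form is anisotropic: `tr(X X) = -tr(Xᴴ X)` for skew-Hermitian `X`. -/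
lemma traceForm3_self_eq_zero (X : su3) (hX : traceForm3 X X = 0) : X = 0 := by
  rw [traceForm3_apply] at hX
  have h1 : (X.1ᴴ * X.1).trace.re = 0 := by rw [X.2.1]; simp [hX]
  have h2 : 0 ≤ (X.1ᴴ * X.1).trace := (Matrix.posSemidef_conjTranspose_mul_self X.1).trace_nonneg
  have h3 : (X.1ᴴ * X.1).trace = 0 :=
    Complex.ext h1 ((Complex.le_def.mp h2).2.symm)
  exact Subtype.ext (Matrix.trace_conjTranspose_mul_self_eq_zero_iff.mp h3)

lemma traceForm3_adjRep {G : Type} [Group G] (α : G →* SU 3) (g : G) (X Y : su3) :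
    traceForm3 (adjRep α g X) (adjRep α g Y) = traceForm3 X Y := by
  rw [traceForm3_apply, traceForm3_apply, adjRep_apply, adjRep_apply]
  have h1 : matSU (α g) * X.1 * star (matSU (α g)) * (matSU (α g) * Y.1 * star (matSU (α g))) =
      matSU (α g) * (X.1 * Y.1) * star (matSU (α g)) := by
    calc _ = matSU (α g) * X.1 * (star (matSU (α g)) * matSU (α g)) * Y.1 * star (matSU (α g)) := by
          noncomm_ring
      _ = _ := by rw [matSU_star_mul]; noncomm_ring
  rw [h1, trace_mul_cycle, matSU_star_mul, one_mul]

/-- The invariant trace form turns invariant linear forms into invariant vectors. -/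
lemma IsIrrep.invariant_dual_eq_zero {G : Type} [Group G] {α : G →* SU 3} (hα : IsIrrep α)
    (φ : Module.Dual ℝ su3) (hφ : ∀ g v, φ (adjRep α g v) = φ v) : φ = 0 := by
  have hinj : Function.Injective traceForm3 := by
    refine (injective_iff_map_eq_zero traceForm3).mpr fun X hX => ?_
    exact traceForm3_self_eq_zero X (by rw [hX]; rfl)
  have hsurj : Function.Surjective traceForm3 :=
    (LinearMap.injective_iff_surjective_of_finrank_eq_finrank
      (Subspace.dual_finrank_eq (K := ℝ) (V := su3)).symm).mp hinj
  obtain ⟨X, rfl⟩ := hsurj φ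
  rw [hα.invariant_eq_zero X, map_zero]
  intro g
  apply hinj
  apply LinearMap.ext
  intro Y
  have h1 : Y = adjRep α g (adjRep α g⁻¹ Y) := by simp
  rw [← hφ g⁻¹ Y]
  conv_lhs => rw [h1]
  exact traceForm3_adjRep α g X _

end Irreducible

/-- A scalar matrix in `SU(3)` is a cube root of unity times the identity. -/
lemma exists_exp_of_smul_one (A : SU 3) (μ : ℂ)
    (hA : matSU A = μ • (1 : Matrix (Fin 3) (Fin 3) ℂ)) :
    ∃ k : ℤ, matSU A
      = Complex.exp (2 * Real.pi * Complex.I * k / 3) • (1 : Matrix (Fin 3) (Fin 3) ℂ) := by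
  have h1 : (matSU A).det = 1 := A.prop
  rw [hA, Matrix.det_smul, Matrix.det_one, mul_one, Fintype.card_fin] at h1
  obtain ⟨i, -, hi⟩ := (Complex.isPrimitiveRoot_exp 3 (by norm_num)).eq_pow_of_pow_eq_one h1
  refine ⟨i, ?_⟩
  rw [hA, ← hi, ← Complex.exp_nat_mul]
  congr 2
  push_cast
  ring

/-! ### The cohomology of irreducible representations -/

/-- For an irreducible `α : π₁(Σ(p,q,r)) → SU(3)`, `α(h)` is a central element
`e^{2πik/3}·I`, and `dim_ℝ H¹(π; su(3)_α)` is `2` if `α(x), α(y), α(z)` each have three pairwise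
distinct eigenvalues, and `0` otherwise. -/
theorem irreducible_SU3_rep_cohomology (p q r : ℕ) (hp : 0 < p) (hq : 0 < q) (hr : 0 < r)
    (hpq : Nat.Coprime p q) (hqr : Nat.Coprime q r) (hpr : Nat.Coprime p r)
    (a c : ℤ) (hac : a * ((p : ℤ) + q) * r + c * p * q = 1)
    (α : BrieskornGroup p q r a c →* SU 3) (hirr : IsIrrep α) :
    (∃ k : ℤ, matSU (α BrieskornGroup.h)
        = Complex.exp (2 * Real.pi * Complex.I * k / 3) • (1 : Matrix (Fin 3) (Fin 3) ℂ)) ∧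
    (((spectrum ℂ (matSU (α BrieskornGroup.x))).ncard = 3 ∧
      (spectrum ℂ (matSU (α BrieskornGroup.y))).ncard = 3 ∧
      (spectrum ℂ (matSU (α BrieskornGroup.z))).ncard = 3) →
      Module.finrank ℝ (groupCohomology.H1 (Rep.of (adjRep α))) = 2) ∧
    (¬ ((spectrum ℂ (matSU (α BrieskornGroup.x))).ncard = 3 ∧
      (spectrum ℂ (matSU (α BrieskornGroup.y))).ncard = 3 ∧
      (spectrum ℂ (matSU (α BrieskornGroup.z))).ncard = 3) →
      Module.finrank ℝ (groupCohomology.H1 (Rep.of (adjRep α))) = 0) := by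
  open BrieskornGroup in
  have hcomm : ∀ g, matSU (α g) * matSU (α h) = matSU (α h) * matSU (α g) := by
    intro g
    have h1 : α g * α h = α h * α g := by rw [← map_mul, ← map_mul, h_mul_comm]
    exact congrArg matSU h1
  obtain ⟨μ, hμ⟩ := hirr.eq_smul_one _ hcomm
  have hh : adjRep α BrieskornGroup.h = 1 := by
    apply LinearMap.ext
    intro X
    rw [Module.End.one_apply, adjRep_apply_eq_iff, hμ]
    simp
  have : FiniteDimensional ℝ su3 := FiniteDimensional.of_finrank_pos (by rw [finrank_su3]; norm_num)
  have hdim := finrank_H1_add hp hq hr (adjRep α) hh hirr.invariant_eq_zero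
    hirr.invariant_dual_eq_zero
  rw [ker_one_sub_adjRep, ker_one_sub_adjRep, ker_one_sub_adjRep, finrank_su3] at hdim
  have h2 : ∀ g, (spectrum ℂ (matSU (α g))).ncard = 3 →
      Module.finrank ℝ (commSu3 (matSU (α g))) = 2 :=
    fun g hg => finrank_commSu3_of_ncard (matSU_star_mul _) hg
  have h4 : ∀ g, (spectrum ℂ (matSU (α g))).ncard ≠ 3 →
      4 ≤ Module.finrank ℝ (commSu3 (matSU (α g))) :=
    fun g hg => four_le_finrank_commSu3 (matSU_star_mul _) hg
  refine ⟨exists_exp_of_smul_one _ μ hμ, ?_, ?_⟩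
  · rintro ⟨hx, hy, hz⟩
    rw [h2 _ hx, h2 _ hy, h2 _ hz] at hdim
    omega
  · intro hne
    -- centralisers have dimension `2` or at least `4`, and they add up to at least `8` here
    have hge : ∀ g, 2 ≤ Module.finrank ℝ (commSu3 (matSU (α g))) := by
      intro g
      by_cases hg : (spectrum ℂ (matSU (α g))).ncard = 3
      · exact (h2 g hg).ge
      · exact le_trans (by norm_num) (h4 g hg)
    have hx := hge BrieskornGroup.x
    have hy := hge BrieskornGroup.y
    have hz := hge BrieskornGroup.z
    by_cases h1 : (spectrum ℂ (matSU (α BrieskornGroup.x))).ncard = 3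
    · by_cases h3 : (spectrum ℂ (matSU (α BrieskornGroup.y))).ncard = 3
      · have h5 : (spectrum ℂ (matSU (α BrieskornGroup.z))).ncard ≠ 3 :=
          fun h6 => hne ⟨h1, h3, h6⟩
        have := h4 _ h5
        omega
      · have := h4 _ h3
        omega
    · have := h4 _ h1
      omega
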